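/- Let A1 ∈ ℍ^{m1×p}, B1 ∈ ℍ^{q1×n1}, C1 ∈ ℍ^{m1×n1}, A2 ∈ ℍ^{m2×m1}, B2 ∈ ℍ^{q2×q1}, C2 ∈ ℍ^{m2×q1}, A3 ∈ ℍ^{m2×p3}, B3 ∈ ℍ^{q2×n3}, C3 ∈ ℍ^{m2×n3} be quaternion matrices. Define A = R_{(A2 A1)} A2, B = R_{B1} L_{(R_{B3} B2)}, C = R_{(A2 A1)} A3, D = B2 L_{(R_{B3} B2)}, C4 = C2 + A2 R_{A1} C1 B1⁺ − R_{A3} C3 B3⁺ B2, E = R_{(A2 A1)} C4 L_{(R_{B3} B2)}, M = R_A C, N = D L_B. Then there exist quaternion matrices X ∈ ℍ^{p×n1}, Y ∈ ℍ^{m1×q1}, Z ∈ ℍ^{m2×q2}, W ∈ ℍ^{p3×n3} satisfying A1 X − Y B1 = C1, A2 Y − Z B2 = C2 and A3 W − Z B3 = C3 if and only if R_{A1} C1 L_{B1} = 0, R_{A2} C2 L_{B2} = 0, R_{A3} C3 L_{B3} = 0, R_M R_A E = 0, E L_B L_N = 0, R_A E L_D = 0, and R_C E L_B = 0. -/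

import Mathlib

open Matrix

noncomputable section

/-- `Mat a b` is the type of `a × b` matrices over the real quaternions. -/
abbrev Mat (a b : ℕ) := Matrix (Fin a) (Fin b) (Quaternion ℝ)

/-- `Ad` is a Moore–Penrose inverse of `A`: the four Penrose equations hold. -/
def IsMPInv {k l : Type*} [Fintype k] [Fintype l]
    (A : Matrix k l (Quaternion ℝ)) (Ad : Matrix l k (Quaternion ℝ)) : Prop :=
  A * Ad * A = A ∧ Ad * A * Ad = Ad ∧ (A * Ad)ᴴ = A * Ad ∧ (Ad * A)ᴴ = Ad * A

/-- The projector `L_A = I - A⁺ A`. -/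
def Lp {k l : Type*} [Fintype k] [Fintype l] [DecidableEq l]
    (A : Matrix k l (Quaternion ℝ)) (Ad : Matrix l k (Quaternion ℝ)) :
    Matrix l l (Quaternion ℝ) :=
  1 - Ad * A

/-- The projector `R_A = I - A A⁺`. -/
def Rp {k l : Type*} [Fintype k] [Fintype l] [DecidableEq k]
    (A : Matrix k l (Quaternion ℝ)) (Ad : Matrix l k (Quaternion ℝ)) :
    Matrix k k (Quaternion ℝ) :=
  1 - A * Ad

/-!
Only the first Penrose equation `A A' A = A` matters, and it makes sense over any ring. The first
equation can be solved for `X` exactly when `R_{A₁} C₁ L_{B₁} = 0` and `Y` has the form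
`A₁ S + V R_{B₁} - R_{A₁} C₁ B₁'`; similarly for the third equation, `W` and
`Z = U R_{B₃} - A₃ T - R_{A₃} C₃ B₃'`. Substituted into the second equation, these leave an equation
`A₂ A₁ S - U R_{B₃} B₂ = ⋯` for `S` and `U`, whose solvability condition is the two-sided equation
`A V B + C T D = E`. Solving that for `V` leaves two equations for `T`, of the form `M T D = ⋯` and
`C T N = ⋯`. A solution of each can be glued into a common one because both equations determine the
same value of `M T N`.
-/

section InnerInverse

variable {R : Type*} [Ring R]
  {k l m n o p : Type*} [Fintype k] [Fintype l] [Fintype m] [Fintype n]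

/-- `G` is an inner inverse (`{1}`-inverse) of `A`: the first Penrose equation holds. -/
def IsInnerInverse (A : Matrix m n R) (G : Matrix n m R) : Prop :=
  A * G * A = A

/-- The idempotent `R_A = 1 - A G` attached to an inner inverse `G` of `A`. Its kernel is the column
space of `A`, so its image represents the cokernel. -/
def cokerProj [DecidableEq m] (A : Matrix m n R) (G : Matrix n m R) : Matrix m m R :=
  1 - A * G

/-- The idempotent `L_A = 1 - G A` attached to an inner inverse `G` of `A`. It projects onto the
kernel of `A`. -/
def kerProj [DecidableEq n] (A : Matrix m n R) (G : Matrix n m R) : Matrix n n R :=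
  1 - G * A

theorem cokerProj_mul_eq_zero_iff [DecidableEq m] {A : Matrix m n R} {A' : Matrix n m R}
    {F : Matrix m o R} : cokerProj A A' * F = 0 ↔ A * (A' * F) = F := by
  rw [cokerProj, Matrix.sub_mul, Matrix.one_mul, sub_eq_zero, Matrix.mul_assoc, eq_comm]

theorem mul_kerProj_eq_zero_iff [DecidableEq n] {A : Matrix m n R} {A' : Matrix n m R}
    {F : Matrix o n R} : F * kerProj A A' = 0 ↔ F * A' * A = F := by
  rw [kerProj, Matrix.mul_sub, Matrix.mul_one, sub_eq_zero, Matrix.mul_assoc, eq_comm]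

theorem IsInnerInverse.cokerProj_mul [DecidableEq m] {A : Matrix m n R} {A' : Matrix n m R}
    (hA : IsInnerInverse A A') : cokerProj A A' * A = 0 :=
  cokerProj_mul_eq_zero_iff.2 (by rw [← Matrix.mul_assoc, hA])

theorem IsInnerInverse.mul_kerProj [DecidableEq n] {A : Matrix m n R} {A' : Matrix n m R}
    (hA : IsInnerInverse A A') : A * kerProj A A' = 0 :=
  mul_kerProj_eq_zero_iff.2 hA

theorem exists_mul_mul_eq_iff [DecidableEq m] [DecidableEq l]
    {A : Matrix m n R} {A' : Matrix n m R} (hA : IsInnerInverse A A')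
    {B : Matrix k l R} {B' : Matrix l k R} (hB : IsInnerInverse B B') {F : Matrix m l R} :
    (∃ X : Matrix n k R, A * X * B = F) ↔ cokerProj A A' * F = 0 ∧ F * kerProj B B' = 0 := by
  constructor
  · rintro ⟨X, rfl⟩
    constructor
    · rw [← Matrix.mul_assoc, ← Matrix.mul_assoc, hA.cokerProj_mul, Matrix.zero_mul,
        Matrix.zero_mul]
    · rw [Matrix.mul_assoc, hB.mul_kerProj, Matrix.mul_zero]
  · rintro ⟨hAF, hFB⟩
    refine ⟨A' * F * B', ?_⟩
    rw [← Matrix.mul_assoc A, cokerProj_mul_eq_zero_iff.1 hAF, mul_kerProj_eq_zero_iff.1 hFB]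

theorem exists_left_mul_sub_mul_eq_iff [DecidableEq m] [DecidableEq k] [DecidableEq l]
    {A : Matrix m n R} {A' : Matrix n m R} (hA : IsInnerInverse A A')
    {B : Matrix k l R} {B' : Matrix l k R} (hB : IsInnerInverse B B')
    {C : Matrix m l R} {Y : Matrix m k R} :
    (∃ X : Matrix n l R, A * X - Y * B = C) ↔
      cokerProj A A' * C * kerProj B B' = 0 ∧
        ∃ (S : Matrix n k R) (V : Matrix m k R),
          Y = A * S + V * cokerProj B B' - cokerProj A A' * C * B' := by
  constructor
  · rintro ⟨X, rfl⟩
    have hC : cokerProj A A' * (A * X - Y * B) = -(cokerProj A A' * Y * B) := by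
      rw [Matrix.mul_sub, ← Matrix.mul_assoc, hA.cokerProj_mul, Matrix.zero_mul, zero_sub,
        Matrix.mul_assoc]
    rw [hC]
    refine ⟨?_, A' * Y, cokerProj A A' * Y, ?_⟩
    · rw [Matrix.neg_mul, Matrix.mul_assoc, hB.mul_kerProj, Matrix.mul_zero, neg_zero]
    · simp only [cokerProj, Matrix.mul_sub, Matrix.sub_mul, Matrix.mul_one, Matrix.one_mul,
        Matrix.neg_mul, Matrix.mul_assoc]
      abel
  · rintro ⟨hC, S, V, rfl⟩
    refine ⟨S * B + A' * C, ?_⟩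
    rw [Matrix.sub_mul, mul_kerProj_eq_zero_iff.1 hC, Matrix.add_mul, Matrix.mul_assoc V,
      hB.cokerProj_mul, cokerProj]
    simp only [Matrix.mul_add, Matrix.sub_mul, Matrix.one_mul, Matrix.mul_zero, Matrix.mul_assoc]
    abel

theorem exists_mul_sub_mul_eq_iff [DecidableEq m] [DecidableEq l]
    {A : Matrix m n R} {A' : Matrix n m R} (hA : IsInnerInverse A A')
    {B : Matrix k l R} {B' : Matrix l k R} (hB : IsInnerInverse B B') {C : Matrix m l R} :
    (∃ (X : Matrix n l R) (Y : Matrix m k R), A * X - Y * B = C) ↔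
      cokerProj A A' * C * kerProj B B' = 0 := by
  classical
  rw [exists_comm]
  simp only [exists_left_mul_sub_mul_eq_iff hA hB]
  exact ⟨fun ⟨_, hC, _⟩ => hC, fun hC => ⟨_, hC, 0, 0, rfl⟩⟩

theorem exists_mul_mul_eq_and_mul_mul_eq_iff [Fintype o]
    {P : Matrix o m R} {Q : Matrix l p R} {C : Matrix m n R} {D : Matrix k l R}
    {M' : Matrix n o R} (hM : IsInnerInverse (P * C) M') {E : Matrix m l R} :
    (∃ T : Matrix n k R, P * C * T * D = P * E ∧ C * T * (D * Q) = E * Q) ↔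
      (∃ T : Matrix n k R, P * C * T * D = P * E) ∧
        ∃ T : Matrix n k R, C * T * (D * Q) = E * Q := by
  refine ⟨fun ⟨T, hP, hQ⟩ => ⟨⟨T, hP⟩, T, hQ⟩, ?_⟩
  rintro ⟨⟨T₁, h₁⟩, T₂, h₂⟩
  have hcompat : P * C * (T₁ - T₂) * (D * Q) = 0 := by
    rw [Matrix.mul_sub, Matrix.sub_mul, ← Matrix.mul_assoc _ D, h₁, Matrix.mul_assoc P C,
      Matrix.mul_assoc P (C * T₂), h₂, Matrix.mul_assoc, sub_self]
  refine ⟨T₂ + M' * (P * C) * (T₁ - T₂), ?_, ?_⟩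
  · have hT : P * C * (T₂ + M' * (P * C) * (T₁ - T₂)) = P * C * T₁ := by
      rw [Matrix.mul_add, ← Matrix.mul_assoc, ← Matrix.mul_assoc _ M', hM, Matrix.mul_sub,
        add_sub_cancel]
    rw [hT, h₁]
  · rw [Matrix.mul_add, Matrix.add_mul, h₂, Matrix.mul_assoc M', ← Matrix.mul_assoc C,
      Matrix.mul_assoc (C * M'), hcompat, Matrix.mul_zero, add_zero]

theorem exists_mul_mul_add_mul_mul_eq_iff [Fintype o] [Fintype p]
    [DecidableEq m] [DecidableEq l]
    {A : Matrix m n R} {A' : Matrix n m R} (hA : IsInnerInverse A A')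
    {B : Matrix k l R} {B' : Matrix l k R} (hB : IsInnerInverse B B')
    {C : Matrix m p R} {C' : Matrix p m R} (hC : IsInnerInverse C C')
    {D : Matrix o l R} {D' : Matrix l o R} (hD : IsInnerInverse D D')
    {M' : Matrix p m R} (hM : IsInnerInverse (cokerProj A A' * C) M')
    {N' : Matrix l o R} (hN : IsInnerInverse (D * kerProj B B') N') {E : Matrix m l R} :
    (∃ (V : Matrix n k R) (T : Matrix p o R), A * V * B + C * T * D = E) ↔
      cokerProj (cokerProj A A' * C) M' * cokerProj A A' * E = 0 ∧
        E * kerProj B B' * kerProj (D * kerProj B B') N' = 0 ∧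
        cokerProj A A' * E * kerProj D D' = 0 ∧
        cokerProj C C' * E * kerProj B B' = 0 := by
  have solve_V (T : Matrix p o R) : (∃ V : Matrix n k R, A * V * B + C * T * D = E) ↔
      cokerProj A A' * C * T * D = cokerProj A A' * E ∧
        C * T * (D * kerProj B B') = E * kerProj B B' := by
    simp only [← eq_sub_iff_add_eq]
    rw [exists_mul_mul_eq_iff hA hB, Matrix.mul_sub, Matrix.sub_mul, sub_eq_zero, sub_eq_zero,
      eq_comm, eq_comm (a := E * _)]
    simp only [Matrix.mul_assoc]
  rw [exists_comm]
  simp only [solve_V]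
  rw [exists_mul_mul_eq_and_mul_mul_eq_iff hM, exists_mul_mul_eq_iff hM hD,
    exists_mul_mul_eq_iff hC hN]
  simp only [Matrix.mul_assoc]
  tauto

end InnerInverse

section System

variable {R : Type*} [Ring R] {m₁ m₂ n₁ n₃ p p₃ q₁ q₂ r : Type*}

theorem exists_mul_add_sub_add_mul_eq_iff [Fintype m₁] [Fintype m₂] [Fintype p] [Fintype q₁]
    [Fintype q₂] [Fintype r] [DecidableEq m₂] [DecidableEq q₁]
    {A₁ : Matrix m₁ p R} {A₂ : Matrix m₂ m₁ R}
    {G : Matrix p m₂ R} (hG : IsInnerInverse (A₂ * A₁) G)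
    {Q : Matrix r q₂ R} {B₂ : Matrix q₂ q₁ R}
    {H : Matrix q₁ r R} (hH : IsInnerInverse (Q * B₂) H)
    {Y : Matrix m₁ q₁ R} {Z : Matrix m₂ q₂ R} {C₂ : Matrix m₂ q₁ R} :
    (∃ (S : Matrix p q₁ R) (U : Matrix m₂ r R), A₂ * (A₁ * S + Y) - (U * Q + Z) * B₂ = C₂) ↔
      cokerProj (A₂ * A₁) G * (C₂ - A₂ * Y + Z * B₂) * kerProj (Q * B₂) H = 0 := by
  rw [← exists_mul_sub_mul_eq_iff hG hH]
  refine exists_congr fun S => exists_congr fun U => ?_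
  rw [← sub_eq_zero, ← sub_eq_zero (b := _ + _)]
  simp only [Matrix.mul_add, Matrix.add_mul, Matrix.mul_assoc]
  abel_nf

variable [Fintype m₁] [Fintype m₂] [Fintype n₁] [Fintype n₃] [Fintype p] [Fintype p₃] [Fintype q₁]
  [Fintype q₂] [DecidableEq m₁] [DecidableEq m₂] [DecidableEq n₁] [DecidableEq n₃] [DecidableEq q₁]
  [DecidableEq q₂]
  {A₁ : Matrix m₁ p R} {A₁' : Matrix p m₁ R} (hA₁ : IsInnerInverse A₁ A₁')
  {B₁ : Matrix q₁ n₁ R} {B₁' : Matrix n₁ q₁ R} (hB₁ : IsInnerInverse B₁ B₁')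
  {C₁ : Matrix m₁ n₁ R}
  {A₂ : Matrix m₂ m₁ R} {B₂ : Matrix q₂ q₁ R} {C₂ : Matrix m₂ q₁ R}
  {A₃ : Matrix m₂ p₃ R} {A₃' : Matrix p₃ m₂ R} (hA₃ : IsInnerInverse A₃ A₃')
  {B₃ : Matrix q₂ n₃ R} {B₃' : Matrix n₃ q₂ R} (hB₃ : IsInnerInverse B₃ B₃')
  {C₃ : Matrix m₂ n₃ R}
  {G : Matrix p m₂ R} (hG : IsInnerInverse (A₂ * A₁) G)
  {H : Matrix q₁ q₂ R} (hH : IsInnerInverse (cokerProj B₃ B₃' * B₂) H)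
  {A : Matrix m₂ m₁ R} (hA : A = cokerProj (A₂ * A₁) G * A₂)
  {B : Matrix q₁ q₁ R} (hB : B = cokerProj B₁ B₁' * kerProj (cokerProj B₃ B₃' * B₂) H)
  {C : Matrix m₂ p₃ R} (hC : C = cokerProj (A₂ * A₁) G * A₃)
  {D : Matrix q₂ q₁ R} (hD : D = B₂ * kerProj (cokerProj B₃ B₃' * B₂) H)
  {C₄ : Matrix m₂ q₁ R}
  (hC₄ : C₄ = C₂ + A₂ * cokerProj A₁ A₁' * C₁ * B₁' - cokerProj A₃ A₃' * C₃ * B₃' * B₂)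
  {E : Matrix m₂ q₁ R}
  (hE : E = cokerProj (A₂ * A₁) G * C₄ * kerProj (cokerProj B₃ B₃' * B₂) H)

include hA₁ hB₁ hA₃ hB₃ hG hH hA hB hC hD hC₄ hE

theorem exists_system_iff_exists_mul_mul_add_mul_mul_eq :
    (∃ (X : Matrix p n₁ R) (Y : Matrix m₁ q₁ R) (Z : Matrix m₂ q₂ R) (W : Matrix p₃ n₃ R),
        A₁ * X - Y * B₁ = C₁ ∧ A₂ * Y - Z * B₂ = C₂ ∧ A₃ * W - Z * B₃ = C₃) ↔
      cokerProj A₁ A₁' * C₁ * kerProj B₁ B₁' = 0 ∧ cokerProj A₃ A₃' * C₃ * kerProj B₃ B₃' = 0 ∧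
        ∃ (V : Matrix m₁ q₁ R) (T : Matrix p₃ q₂ R), A * V * B + C * T * D = E := by
  have solve_SU (V : Matrix m₁ q₁ R) (T : Matrix p₃ q₂ R) :
      (∃ (S : Matrix p q₁ R) (U : Matrix m₂ q₂ R),
        A₂ * (A₁ * S + V * cokerProj B₁ B₁' - cokerProj A₁ A₁' * C₁ * B₁') -
          (A₃ * T + U * cokerProj B₃ B₃' - cokerProj A₃ A₃' * C₃ * B₃') * B₂ = C₂) ↔
        A * V * B + C * -T * D = E := by
    have residual_eq : cokerProj (A₂ * A₁) G *
          (C₂ - A₂ * (V * cokerProj B₁ B₁' - cokerProj A₁ A₁' * C₁ * B₁') +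
            (A₃ * T - cokerProj A₃ A₃' * C₃ * B₃') * B₂) *
          kerProj (cokerProj B₃ B₃' * B₂) H = E - (A * V * B + C * -T * D) := by
      rw [hE, hC₄, hA, hB, hC, hD]
      simp only [Matrix.mul_add, Matrix.mul_sub, Matrix.add_mul, Matrix.sub_mul, Matrix.mul_neg,
        Matrix.neg_mul, Matrix.mul_assoc]
      abel
    simp only [add_sub_assoc, add_sub_left_comm (A₃ * T)]
    rw [exists_mul_add_sub_add_mul_eq_iff hG hH, residual_eq, sub_eq_zero, eq_comm]
  constructor
  · rintro ⟨X, Y, Z, W, h₁, h₂, h₃⟩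
    obtain ⟨hC₁, S, V, rfl⟩ := (exists_left_mul_sub_mul_eq_iff hA₁ hB₁).1 ⟨X, h₁⟩
    obtain ⟨hC₃, T, U, rfl⟩ := (exists_left_mul_sub_mul_eq_iff hA₃ hB₃).1 ⟨W, h₃⟩
    exact ⟨hC₁, hC₃, V, -T, (solve_SU V T).1 ⟨S, U, h₂⟩⟩
  · rintro ⟨hC₁, hC₃, V, T, hVT⟩
    obtain ⟨S, U, h₂⟩ := (solve_SU V (-T)).2 (by rwa [neg_neg])
    obtain ⟨X, h₁⟩ := (exists_left_mul_sub_mul_eq_iff hA₁ hB₁).2 ⟨hC₁, S, V, rfl⟩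
    obtain ⟨W, h₃⟩ := (exists_left_mul_sub_mul_eq_iff hA₃ hB₃).2 ⟨hC₃, -T, U, rfl⟩
    exact ⟨X, _, _, W, h₁, h₂, h₃⟩

theorem stmt_16_general
    {A₂' : Matrix m₁ m₂ R} (hA₂ : IsInnerInverse A₂ A₂')
    {B₂' : Matrix q₁ q₂ R} (hB₂ : IsInnerInverse B₂ B₂')
    {A' : Matrix m₁ m₂ R} (hA' : IsInnerInverse A A')
    {B' : Matrix q₁ q₁ R} (hB' : IsInnerInverse B B')
    {C' : Matrix p₃ m₂ R} (hC' : IsInnerInverse C C')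
    {D' : Matrix q₁ q₂ R} (hD' : IsInnerInverse D D')
    {M' : Matrix p₃ m₂ R} (hM' : IsInnerInverse (cokerProj A A' * C) M')
    {N' : Matrix q₁ q₂ R} (hN' : IsInnerInverse (D * kerProj B B') N') :
    (∃ (X : Matrix p n₁ R) (Y : Matrix m₁ q₁ R) (Z : Matrix m₂ q₂ R) (W : Matrix p₃ n₃ R),
        A₁ * X - Y * B₁ = C₁ ∧ A₂ * Y - Z * B₂ = C₂ ∧ A₃ * W - Z * B₃ = C₃) ↔
      cokerProj A₁ A₁' * C₁ * kerProj B₁ B₁' = 0 ∧ cokerProj A₂ A₂' * C₂ * kerProj B₂ B₂' = 0 ∧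
        cokerProj A₃ A₃' * C₃ * kerProj B₃ B₃' = 0 ∧
        cokerProj (cokerProj A A' * C) M' * cokerProj A A' * E = 0 ∧
        E * kerProj B B' * kerProj (D * kerProj B B') N' = 0 ∧
        cokerProj A A' * E * kerProj D D' = 0 ∧ cokerProj C C' * E * kerProj B B' = 0 := by
  have hsystem :=
    exists_system_iff_exists_mul_mul_add_mul_mul_eq hA₁ hB₁ hA₃ hB₃ hG hH hA hB hC hD hC₄ hE
  rw [exists_mul_mul_add_mul_mul_eq_iff hA' hB' hC' hD' hM' hN'] at hsystem
  refine ⟨fun hsol => ?_, fun ⟨hC₁, _, hC₃, hVT⟩ => hsystem.2 ⟨hC₁, hC₃, hVT⟩⟩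
  obtain ⟨hC₁, hC₃, hVT⟩ := hsystem.1 hsol
  obtain ⟨X, Y, Z, W, -, h₂, -⟩ := hsol
  exact ⟨hC₁, (exists_mul_sub_mul_eq_iff hA₂ hB₂).1 ⟨Y, Z, h₂⟩, hC₃, hVT⟩

end System

theorem stmt_16 {m1 p q1 n1 m2 q2 p3 n3 : ℕ}
    (A1 : Mat m1 p) (A1d : Mat p m1) (hA1 : IsMPInv A1 A1d)
    (B1 : Mat q1 n1) (B1d : Mat n1 q1) (hB1 : IsMPInv B1 B1d)
    (C1 : Mat m1 n1)
    (A2 : Mat m2 m1) (A2d : Mat m1 m2) (hA2 : IsMPInv A2 A2d)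
    (B2 : Mat q2 q1) (B2d : Mat q1 q2) (hB2 : IsMPInv B2 B2d)
    (C2 : Mat m2 q1)
    (A3 : Mat m2 p3) (A3d : Mat p3 m2) (hA3 : IsMPInv A3 A3d)
    (B3 : Mat q2 n3) (B3d : Mat n3 q2) (hB3 : IsMPInv B3 B3d)
    (C3 : Mat m2 n3)
    (A21 : Mat m2 p) (hA21 : A21 = A2 * A1)
    (A21d : Mat p m2) (hA21d : IsMPInv A21 A21d)
    (RB2 : Mat q2 q1) (hRB2 : RB2 = Rp B3 B3d * B2)
    (RB2d : Mat q1 q2) (hRB2d : IsMPInv RB2 RB2d)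
    (A : Mat m2 m1) (hA : A = Rp A21 A21d * A2)
    (Ad : Mat m1 m2) (hAd : IsMPInv A Ad)
    (B : Mat q1 q1) (hB : B = Rp B1 B1d * Lp RB2 RB2d)
    (Bd : Mat q1 q1) (hBd : IsMPInv B Bd)
    (C : Mat m2 p3) (hC : C = Rp A21 A21d * A3)
    (Cd : Mat p3 m2) (hCd : IsMPInv C Cd)
    (D : Mat q2 q1) (hD : D = B2 * Lp RB2 RB2d)
    (Dd : Mat q1 q2) (hDd : IsMPInv D Dd)
    (C4 : Mat m2 q1)
    (hC4 : C4 = C2 + A2 * Rp A1 A1d * C1 * B1d - Rp A3 A3d * C3 * B3d * B2)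
    (E : Mat m2 q1) (hE : E = Rp A21 A21d * C4 * Lp RB2 RB2d)
    (MM : Mat m2 p3) (hMM : MM = Rp A Ad * C)
    (MMd : Mat p3 m2) (hMMd : IsMPInv MM MMd)
    (NN : Mat q2 q1) (hNN : NN = D * Lp B Bd)
    (NNd : Mat q1 q2) (hNNd : IsMPInv NN NNd) :
    (∃ (X : Mat p n1) (Y : Mat m1 q1) (Z : Mat m2 q2) (W : Mat p3 n3),
        A1 * X - Y * B1 = C1 ∧ A2 * Y - Z * B2 = C2 ∧ A3 * W - Z * B3 = C3) ↔
      (Rp A1 A1d * C1 * Lp B1 B1d = 0 ∧ Rp A2 A2d * C2 * Lp B2 B2d = 0 ∧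
        Rp A3 A3d * C3 * Lp B3 B3d = 0 ∧
        Rp MM MMd * Rp A Ad * E = 0 ∧ E * Lp B Bd * Lp NN NNd = 0 ∧
        Rp A Ad * E * Lp D Dd = 0 ∧ Rp C Cd * E * Lp B Bd = 0) := by
  subst hA21 hRB2 hMM hNN
  exact stmt_16_general hA1.1 hB1.1 hA3.1 hB3.1 hA21d.1 hRB2d.1 hA hB hC hD hC4 hE
    hA2.1 hB2.1 hAd.1 hBd.1 hCd.1 hDd.1 hMMd.1 hNNd.1
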